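/- arXiv:2404.08171 — 2 statements merged into one kernel-verified Lean document; each statement's English description precedes it below -/
import Mathlib

section
/- Let Ω ⊆ [n1]×[n2]×[n3] be the index set of given entries of a partially given tensor 𝒜 and let a ∈ ℝ^{n1}, b ∈ ℝ^{n2} be vectors satisfying the slice equations: 𝒜_{i1 j1 k}·a_{i2} b_{j2} − 𝒜_{i2 j2 k}·a_{i1} b_{j1} = 0 for all (i1,j1,k), (i2,j2,k) ∈ Ω sharing the same third index k. Suppose that for every k ∈ [n3] for which there exists some (i,j,k) ∈ Ω, there is at least one (i,j,k) ∈ Ω with a_i b_j ≠ 0. Then there exists a vector c ∈ ℝ^{n3} such that 𝒜_{ijk} = a_i b_j c_k for all (i,j,k) ∈ Ω; that is, 𝒜 has the rank-1 completion a ⊗ b ⊗ c. -/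
/-!
The entries `c k` can be chosen independently, one slice at a time. In a nonempty slice, a given
entry `(i₀, j₀, k)` with `a i₀ * b j₀ ≠ 0` forces `c k = A i₀ j₀ k / (a i₀ * b j₀)`, and the slice
equations between it and any other given entry say exactly that this value fits there too. In an
empty slice any value works.
-/

/-- If `a, b` satisfy the slice equations of the partially given tensor `A`,
and each nonempty slice has some given entry with `a i * b j ≠ 0`, then there is
`c` giving a rank-1 completion `A = a ⊗ b ⊗ c` on `Ω`. -/
theorem rank1_completion_of_slice_equations
    (n1 n2 n3 : ℕ)
    (Ω : Set (Fin n1 × Fin n2 × Fin n3))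
    (A : Fin n1 → Fin n2 → Fin n3 → ℝ)
    (a : Fin n1 → ℝ) (b : Fin n2 → ℝ)
    (hslice : ∀ i1 j1 i2 j2 k, (i1, j1, k) ∈ Ω → (i2, j2, k) ∈ Ω →
      A i1 j1 k * (a i2 * b j2) - A i2 j2 k * (a i1 * b j1) = 0)
    (hnz : ∀ k : Fin n3, (∃ i j, (i, j, k) ∈ Ω) →
      ∃ i j, (i, j, k) ∈ Ω ∧ a i * b j ≠ 0) :
    ∃ c : Fin n3 → ℝ, ∀ i j k, (i, j, k) ∈ Ω → A i j k = a i * b j * c k := by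
  have slice : ∀ k, ∃ x : ℝ, ∀ i j, (i, j, k) ∈ Ω → A i j k = a i * b j * x := by
    intro k
    by_cases h : ∃ i j, (i, j, k) ∈ Ω
    · obtain ⟨i₀, j₀, hmem, hne⟩ := hnz k h
      refine ⟨A i₀ j₀ k / (a i₀ * b j₀), fun i j hij => ?_⟩
      rw [← mul_div_assoc, eq_div_iff hne]
      linarith [hslice i j i₀ j₀ k hij hmem]
    · exact ⟨0, fun i j hij => absurd ⟨i, j, hij⟩ h⟩
  choose c hc using slice
  exact ⟨c, fun i j k => hc k i j⟩
end

section
/- Let Ω ⊆ [n1]×[n2]×[n3] be the index set of given entries of a partially given tensor 𝒜, and let (î, ĵ, k̂) ∈ Ω be an index with 𝒜_{î ĵ k̂} ≠ 0. If 𝒜 has a rank-1 completion, i.e., there exist vectors a ∈ ℝ^{n1}, b ∈ ℝ^{n2}, c ∈ ℝ^{n3} with 𝒜_{ijk} = a_i b_j c_k for all (i,j,k) ∈ Ω, then there exist vectors a' ∈ ℝ^{n1}, b' ∈ ℝ^{n2} such that the rank-1 matrix X = a'(b')ᵀ satisfies X_{î ĵ} = 1 and the slice equations: 𝒜_{i1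 j1 k}·X_{i2 j2} − 𝒜_{i2 j2 k}·X_{i1 j1} = 0 for all (i1,j1,k), (i2,j2,k) ∈ Ω sharing the same third index k. -/
/-- If the partially given tensor `A` has a rank-1 completion and the entry
`A î ĵ k̂` is given and nonzero, then there exist `a', b'` such that the rank-1
matrix `X = a' (b')ᵀ` satisfies `X î ĵ = 1` and the slice equations. -/
theorem exists_rank1_matrix_of_rank1_completion
    (n1 n2 n3 : ℕ)
    (Ω : Set (Fin n1 × Fin n2 × Fin n3))
    (A : Fin n1 → Fin n2 → Fin n3 → ℝ)
    (ih : Fin n1) (jh : Fin n2) (kh : Fin n3)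
    (hmem : (ih, jh, kh) ∈ Ω) (hA0 : A ih jh kh ≠ 0)
    (hcomp : ∃ (a : Fin n1 → ℝ) (b : Fin n2 → ℝ) (c : Fin n3 → ℝ),
      ∀ i j k, (i, j, k) ∈ Ω → A i j k = a i * b j * c k) :
    ∃ (a' : Fin n1 → ℝ) (b' : Fin n2 → ℝ) (X : Fin n1 → Fin n2 → ℝ),
      (∀ i j, X i j = a' i * b' j) ∧
      X ih jh = 1 ∧
      (∀ i1 j1 i2 j2 k, (i1, j1, k) ∈ Ω → (i2, j2, k) ∈ Ω →
        A i1 j1 k * X i2 j2 - A i2 j2 k * X i1 j1 = 0) := by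
  obtain ⟨a, b, c, h⟩ := hcomp
  rw [h ih jh kh hmem] at hA0
  have hab : a ih * b jh ≠ 0 := left_ne_zero_of_mul hA0
  have ha : a ih ≠ 0 := left_ne_zero_of_mul hab
  have hb : b jh ≠ 0 := right_ne_zero_of_mul hab
  -- Normalize `a` and `b` at the distinguished index. Each slice of the completion is a
  -- multiple of `a bᵀ`, hence of `X`, so the slice equations hold.
  refine ⟨fun i => a i / a ih, fun j => b j / b jh, fun i j => a i / a ih * (b j / b jh),
    fun _ _ => rfl, by simp [ha, hb], ?_⟩
  intro i1 j1 i2 j2 k h1 h2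
  rw [h _ _ _ h1, h _ _ _ h2]
  ring
end
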